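/- arXiv:1510.09110 — 3 statements merged into one kernel-verified Lean document; each statement's English description precedes it below -/
import Mathlib

section
/- Let x be a real number, let c > 0 and T > 0, and define X : [0,T] → ℝ by X(t) = x·sinh(c(T−t))/sinh(cT). Then X is differentiable, X(0) = x, X(T) = 0, and X satisfies the feedback ordinary differential equation X′(t) = −X(t)·c·coth(c(T−t)) for all t ∈ [0,T). -/
/-- The optimal position `X(t) = x·sinh(c(T−t))/sinh(cT)` of shares yet to be purchased, with
initial target `x`, horizon `T` and `c = √(μσ²/η)`. The parameter `c` is kept abstract, and the
formula is read on all of `ℝ`, so that derivatives at the endpoints are two-sided. -/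
noncomputable def optimalTrajectory (x c T t : ℝ) : ℝ :=
  x * Real.sinh (c * (T - t)) / Real.sinh (c * T)

namespace optimalTrajectory

theorem apply_zero (x : ℝ) {c T : ℝ} (hc : c ≠ 0) (hT : T ≠ 0) : optimalTrajectory x c T 0 = x := by
  have sinh_ne_zero : Real.sinh (c * T) ≠ 0 := Real.sinh_ne_zero.2 (mul_ne_zero hc hT)
  rw [optimalTrajectory, sub_zero, mul_div_cancel_right₀ x sinh_ne_zero]

theorem apply_horizon (x c T : ℝ) : optimalTrajectory x c T T = 0 := by
  simp [optimalTrajectory]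

protected theorem hasDerivAt (x c T t : ℝ) :
    HasDerivAt (optimalTrajectory x c T)
      (x * (Real.cosh (c * (T - t)) * -c) / Real.sinh (c * T)) t := by
  have hasDerivAt_arg : HasDerivAt (fun s => c * (T - s)) (-c) t := by
    simpa only [mul_neg_one] using ((hasDerivAt_id' t).const_sub T).const_mul c
  exact (hasDerivAt_arg.sinh.const_mul x).div_const _

protected theorem differentiable (x c T : ℝ) : Differentiable ℝ (optimalTrajectory x c T) :=
  fun t => (optimalTrajectory.hasDerivAt x c T t).differentiableAt

theorem hasDerivAt_feedback (x : ℝ) {c T t : ℝ} (hc : c ≠ 0) (ht : t ≠ T) :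
    HasDerivAt (optimalTrajectory x c T)
      (-(optimalTrajectory x c T t * c *
        (Real.cosh (c * (T - t)) / Real.sinh (c * (T - t))))) t := by
  have sinh_ne_zero : Real.sinh (c * (T - t)) ≠ 0 :=
    Real.sinh_ne_zero.2 (mul_ne_zero hc (sub_ne_zero.2 ht.symm))
  have velocity_eq : x * (Real.cosh (c * (T - t)) * -c) / Real.sinh (c * T) =
      -(optimalTrajectory x c T t * c *
        (Real.cosh (c * (T - t)) / Real.sinh (c * (T - t)))) := by
    rw [optimalTrajectory]
    field_simp
  exact velocity_eq ▸ optimalTrajectory.hasDerivAt x c T t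

end optimalTrajectory

/-- Let `x ∈ ℝ`, `c > 0`, `T > 0`, and define
`X(t) = x·sinh(c(T−t))/sinh(cT)`. Then `X` is differentiable, `X(0) = x`,
`X(T) = 0`, and `X` satisfies the feedback ODE
`X′(t) = −X(t)·c·coth(c(T−t))` for all `t ∈ [0,T)`
(where `coth u = cosh u / sinh u`). -/
theorem optimal_trajectory_feedback
    (x c T : ℝ) (hc : 0 < c) (hT : 0 < T)
    (X : ℝ → ℝ)
    (hX : X = fun t => x * Real.sinh (c * (T - t)) / Real.sinh (c * T)) :
    DifferentiableOn ℝ X (Set.Icc 0 T) ∧ X 0 = x ∧ X T = 0 ∧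
      ∀ t ∈ Set.Ico (0 : ℝ) T,
        HasDerivAt X
          (-(X t * c * (Real.cosh (c * (T - t)) / Real.sinh (c * (T - t))))) t := by
  obtain rfl : X = optimalTrajectory x c T := hX
  exact ⟨(optimalTrajectory.differentiable x c T).differentiableOn,
    optimalTrajectory.apply_zero x hc.ne' hT.ne',
    optimalTrajectory.apply_horizon x c T,
    fun t ht => optimalTrajectory.hasDerivAt_feedback x hc.ne' ht.2.ne⟩
end

section
/- Let T > 0, let μ be a real constant, let θ, σ₁, σ₂, η : [0,T] → ℝ be continuous with η(t) > 0 for all t, and let D, E, F, G, H, I, L, M, N, O, P, Q : [0,T) → ℝ be differentiable functions satisfying on [0,T) the system: −D′ = −D²/η + μσ₁²(1+N)² + μσ₂²N²; −E′ = −2θE − F²/(4η) + 4μ(σ₁²+σ₂²)M²; −F′ = −θ − θF − DF/η + 4μσ₁²(1+N)M + 4μσ₂²MN; −G′ = −DG/η + 2μσ₁²(1+N)P + 2μσ₂²NP; −H′ = −θH − FG/(2η) + 4μ(σ₁²+σ₂²)MP; −I′ = (σ₁²+σ₂²)E − G²/(4η) + μ(σ₁²+σ₂²)P²; −L′ = D²/η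 − 2DL/η; −M′ = F²/(4η) − 2θM − FN/(2η); −N′ = −θ + DF/η − θN − (DN+FL)/η; −O′ = (DG − DO − GL)/η; −P′ = −θP + (FG − FO − GN)/(2η); −Q′ = G²/(4η) + (σ₁²+σ₂²)M − GO/(2η). Define C(x,β,t) = x²D(t) + β²E(t) + xβF(t) + xG(t) + βH(t) + I(t) and f(x,β,t) = x²L(t) + β²M(t) + xβN(t) + xO(t) + βP(t) + Q(t). Then for all x, β ∈ ℝ and t ∈ [0,T): 0 = −θxβ − C_β·θβ + (1/2)C_ββ(σ₁²+σ₂²) + C_t − C_x²/(4η) + μσ₁²(x + f_β)² + μσ₂²f_β², and 0 = −θxβ + C_x²/(4η) − f_β·θβ + (1/2)f_ββ(σ₁²+σ₂²) − C_x·f_x/(2η) + f_t. -/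
/-- Quadratic ansatz `(x, β, t) ↦ x²D(t) + β²E(t) + xβF(t) + xG(t) + βH(t) + I(t)`. -/
noncomputable def quadAnsatz (D E F G H I : ℝ → ℝ) : ℝ → ℝ → ℝ → ℝ :=
  fun x β t => x ^ 2 * D t + β ^ 2 * E t + x * β * F t + x * G t + β * H t + I t

/-- Partial derivative in the first (position) variable. -/
noncomputable def pdX (C : ℝ → ℝ → ℝ → ℝ) (x β t : ℝ) : ℝ := deriv (fun y => C y β t) x

/-- Partial derivative in the second variable. -/
noncomputable def pdB (C : ℝ → ℝ → ℝ → ℝ) (x β t : ℝ) : ℝ := deriv (fun b => C x b t) β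

/-- Second partial derivative in the second variable. -/
noncomputable def pdBB (C : ℝ → ℝ → ℝ → ℝ) (x β t : ℝ) : ℝ := deriv (fun b => pdB C x b t) β

/-- Partial derivative in the time variable. -/
noncomputable def pdT (C : ℝ → ℝ → ℝ → ℝ) (x β t : ℝ) : ℝ := deriv (fun s => C x β s) t

/-!
Substituting the quadratic ansätze makes the right-hand side of either PDE a polynomial of degree
two in `(x, β)`, since the nonlinear terms are products of first derivatives, which are affine. The
coefficient of each of `x²`, `β²`, `xβ`, `x`, `β`, `1` is the residual of one of the twelve ODEs.
-/

/-- The right-hand side of the HJB equation for the value function `C`; its vanishing is the PDE.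
The parameters are the values at time `t` of the coefficient functions of the same names. -/
noncomputable def valueResidual (μ θ σ₁ σ₂ η : ℝ) (C f : ℝ → ℝ → ℝ → ℝ) (x β t : ℝ) : ℝ :=
  -θ * x * β - pdB C x β t * θ * β + (1 / 2) * pdBB C x β t * (σ₁ ^ 2 + σ₂ ^ 2) + pdT C x β t
    - (pdX C x β t) ^ 2 / (4 * η)
    + μ * σ₁ ^ 2 * (x + pdB f x β t) ^ 2 + μ * σ₂ ^ 2 * (pdB f x β t) ^ 2

/-- The right-hand side of the PDE for the conditional expectation `f` of the remaining cost when
trading at the rate `v* = C_x / (2η)`: the running cost is `-θxβ + η (v*)²`, and `-v* f_x` comes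
from `dx = -v* dt`. -/
noncomputable def remainingCostResidual (θ σ₁ σ₂ η : ℝ) (C f : ℝ → ℝ → ℝ → ℝ) (x β t : ℝ) : ℝ :=
  -θ * x * β + (pdX C x β t) ^ 2 / (4 * η) - pdB f x β t * θ * β
    + (1 / 2) * pdBB f x β t * (σ₁ ^ 2 + σ₂ ^ 2) - pdX C x β t * pdX f x β t / (2 * η)
    + pdT f x β t

theorem hasDerivAt_quadratic {𝕜 : Type*} [NontriviallyNormedField 𝕜] (a b c z : 𝕜) :
    HasDerivAt (fun w => a * w ^ 2 + b * w + c) (2 * a * z + b) z := by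
  have h := (((hasDerivAt_pow 2 z).const_mul a).add ((hasDerivAt_id z).const_mul b)).add_const c
  exact h.congr_deriv (by push_cast; ring)

theorem pdX_quadAnsatz (D E F G H I : ℝ → ℝ) (x β t : ℝ) :
    pdX (quadAnsatz D E F G H I) x β t = 2 * x * D t + β * F t + G t := by
  have quadratic_in_x : (fun y => quadAnsatz D E F G H I y β t) =
      fun y => D t * y ^ 2 + (β * F t + G t) * y + (β ^ 2 * E t + β * H t + I t) := by
    funext y
    rw [quadAnsatz]
    ring
  rw [pdX, quadratic_in_x, (hasDerivAt_quadratic _ _ _ x).deriv]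
  ring

theorem pdB_quadAnsatz (D E F G H I : ℝ → ℝ) (x β t : ℝ) :
    pdB (quadAnsatz D E F G H I) x β t = 2 * β * E t + x * F t + H t := by
  have quadratic_in_β : (fun b => quadAnsatz D E F G H I x b t) =
      fun b => E t * b ^ 2 + (x * F t + H t) * b + (x ^ 2 * D t + x * G t + I t) := by
    funext b
    rw [quadAnsatz]
    ring
  rw [pdB, quadratic_in_β, (hasDerivAt_quadratic _ _ _ β).deriv]
  ring

theorem pdBB_quadAnsatz (D E F G H I : ℝ → ℝ) (x β t : ℝ) :
    pdBB (quadAnsatz D E F G H I) x β t = 2 * E t := by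
  simp [pdBB, pdB_quadAnsatz]

theorem pdT_quadAnsatz {D E F G H I : ℝ → ℝ} {D' E' F' G' H' I' t : ℝ}
    (hD : HasDerivAt D D' t) (hE : HasDerivAt E E' t) (hF : HasDerivAt F F' t)
    (hG : HasDerivAt G G' t) (hH : HasDerivAt H H' t) (hI : HasDerivAt I I' t) (x β : ℝ) :
    pdT (quadAnsatz D E F G H I) x β t
      = x ^ 2 * D' + β ^ 2 * E' + x * β * F' + x * G' + β * H' + I' :=
  ((((((hD.const_mul (x ^ 2)).add (hE.const_mul (β ^ 2))).add (hF.const_mul (x * β))).add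
    (hG.const_mul x)).add (hH.const_mul β)).add hI).deriv

theorem valueResidual_quadAnsatz (μ θ σ₁ σ₂ η : ℝ) {D E F G H I : ℝ → ℝ} (L M N O P Q : ℝ → ℝ)
    {D' E' F' G' H' I' t : ℝ}
    (hD : HasDerivAt D D' t) (hE : HasDerivAt E E' t) (hF : HasDerivAt F F' t)
    (hG : HasDerivAt G G' t) (hH : HasDerivAt H H' t) (hI : HasDerivAt I I' t) (x β : ℝ) :
    valueResidual μ θ σ₁ σ₂ η (quadAnsatz D E F G H I) (quadAnsatz L M N O P Q) x β t
      = x ^ 2 * (D' + (-(D t) ^ 2 / η + μ * σ₁ ^ 2 * (1 + N t) ^ 2 + μ * σ₂ ^ 2 * (N t) ^ 2))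
        + β ^ 2 * (E' + (-2 * θ * E t - (F t) ^ 2 / (4 * η)
            + 4 * μ * (σ₁ ^ 2 + σ₂ ^ 2) * (M t) ^ 2))
        + x * β * (F' + (-θ - θ * F t - D t * F t / η
            + 4 * μ * σ₁ ^ 2 * (1 + N t) * M t + 4 * μ * σ₂ ^ 2 * M t * N t))
        + x * (G' + (-D t * G t / η + 2 * μ * σ₁ ^ 2 * (1 + N t) * P t
            + 2 * μ * σ₂ ^ 2 * N t * P t))
        + β * (H' + (-θ * H t - F t * G t / (2 * η)
            + 4 * μ * (σ₁ ^ 2 + σ₂ ^ 2) * M t * P t))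
        + (I' + ((σ₁ ^ 2 + σ₂ ^ 2) * E t - (G t) ^ 2 / (4 * η)
            + μ * (σ₁ ^ 2 + σ₂ ^ 2) * (P t) ^ 2)) := by
  rw [valueResidual, pdT_quadAnsatz hD hE hF hG hH hI]
  simp only [pdX_quadAnsatz, pdB_quadAnsatz, pdBB_quadAnsatz]
  ring

theorem remainingCostResidual_quadAnsatz (θ σ₁ σ₂ η : ℝ) (D E F G H I : ℝ → ℝ)
    {L M N O P Q : ℝ → ℝ} {L' M' N' O' P' Q' t : ℝ}
    (hL : HasDerivAt L L' t) (hM : HasDerivAt M M' t) (hN : HasDerivAt N N' t)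
    (hO : HasDerivAt O O' t) (hP : HasDerivAt P P' t) (hQ : HasDerivAt Q Q' t) (x β : ℝ) :
    remainingCostResidual θ σ₁ σ₂ η (quadAnsatz D E F G H I) (quadAnsatz L M N O P Q) x β t
      = x ^ 2 * (L' + ((D t) ^ 2 / η - 2 * D t * L t / η))
        + β ^ 2 * (M' + ((F t) ^ 2 / (4 * η) - 2 * θ * M t - F t * N t / (2 * η)))
        + x * β * (N' + (-θ + D t * F t / η - θ * N t - (D t * N t + F t * L t) / η))
        + x * (O' + (D t * G t - D t * O t - G t * L t) / η)
        + β * (P' + (-θ * P t + (F t * G t - F t * O t - G t * N t) / (2 * η)))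
        + (Q' + ((G t) ^ 2 / (4 * η) + (σ₁ ^ 2 + σ₂ ^ 2) * M t - G t * O t / (2 * η))) := by
  rw [remainingCostResidual, pdT_quadAnsatz hL hM hN hO hP hQ]
  simp only [pdX_quadAnsatz, pdB_quadAnsatz, pdBB_quadAnsatz]
  ring

theorem signal_ODE_system_implies_HJB_general
    {μ θ σ₁ σ₂ η t : ℝ} (_hη : η ≠ 0)
    {D E F G H I L M N O P Q : ℝ → ℝ} {D' E' F' G' H' I' L' M' N' O' P' Q' : ℝ}
    (hD : HasDerivAt D D' t) (hE : HasDerivAt E E' t) (hF : HasDerivAt F F' t)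
    (hG : HasDerivAt G G' t) (hH : HasDerivAt H H' t) (hI : HasDerivAt I I' t)
    (hL : HasDerivAt L L' t) (hM : HasDerivAt M M' t) (hN : HasDerivAt N N' t)
    (hO : HasDerivAt O O' t) (hP : HasDerivAt P P' t) (hQ : HasDerivAt Q Q' t)
    (hsys :
      (-D' = -(D t) ^ 2 / η + μ * σ₁ ^ 2 * (1 + N t) ^ 2 + μ * σ₂ ^ 2 * (N t) ^ 2) ∧
      (-E' = -2 * θ * E t - (F t) ^ 2 / (4 * η) + 4 * μ * (σ₁ ^ 2 + σ₂ ^ 2) * (M t) ^ 2) ∧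
      (-F' = -θ - θ * F t - D t * F t / η
          + 4 * μ * σ₁ ^ 2 * (1 + N t) * M t + 4 * μ * σ₂ ^ 2 * M t * N t) ∧
      (-G' = -D t * G t / η + 2 * μ * σ₁ ^ 2 * (1 + N t) * P t
          + 2 * μ * σ₂ ^ 2 * N t * P t) ∧
      (-H' = -θ * H t - F t * G t / (2 * η) + 4 * μ * (σ₁ ^ 2 + σ₂ ^ 2) * M t * P t) ∧
      (-I' = (σ₁ ^ 2 + σ₂ ^ 2) * E t - (G t) ^ 2 / (4 * η)
          + μ * (σ₁ ^ 2 + σ₂ ^ 2) * (P t) ^ 2) ∧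
      (-L' = (D t) ^ 2 / η - 2 * D t * L t / η) ∧
      (-M' = (F t) ^ 2 / (4 * η) - 2 * θ * M t - F t * N t / (2 * η)) ∧
      (-N' = -θ + D t * F t / η - θ * N t - (D t * N t + F t * L t) / η) ∧
      (-O' = (D t * G t - D t * O t - G t * L t) / η) ∧
      (-P' = -θ * P t + (F t * G t - F t * O t - G t * N t) / (2 * η)) ∧
      (-Q' = (G t) ^ 2 / (4 * η) + (σ₁ ^ 2 + σ₂ ^ 2) * M t - G t * O t / (2 * η)))
    (x β : ℝ) :
    0 = valueResidual μ θ σ₁ σ₂ η (quadAnsatz D E F G H I) (quadAnsatz L M N O P Q) x β t ∧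
      0 = remainingCostResidual θ σ₁ σ₂ η (quadAnsatz D E F G H I) (quadAnsatz L M N O P Q)
        x β t := by
  obtain ⟨odeD, odeE, odeF, odeG, odeH, odeI, odeL, odeM, odeN, odeO, odeP, odeQ⟩ := hsys
  constructor
  · rw [valueResidual_quadAnsatz μ θ σ₁ σ₂ η L M N O P Q hD hE hF hG hH hI,
      ← odeD, ← odeE, ← odeF, ← odeG, ← odeH, ← odeI]
    ring
  · rw [remainingCostResidual_quadAnsatz θ σ₁ σ₂ η D E F G H I hL hM hN hO hP hQ,
      ← odeL, ← odeM, ← odeN, ← odeO, ← odeP, ← odeQ]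
    ring

/-- In the random-pricing-signal model, if the coefficient
functions `D, …, Q` solve the displayed ODE system on `[0,T)`, then the
quadratic ansätze `C` and `f` solve the two coupled HJB-type PDEs for all
`x, β ∈ ℝ` and `t ∈ [0,T)`. -/
theorem signal_ODE_system_implies_HJB
    (T μ : ℝ) (hT : 0 < T)
    (θ σ₁ σ₂ η : ℝ → ℝ)
    (hθ : ContinuousOn θ (Set.Icc 0 T)) (hσ₁ : ContinuousOn σ₁ (Set.Icc 0 T))
    (hσ₂ : ContinuousOn σ₂ (Set.Icc 0 T)) (hη : ContinuousOn η (Set.Icc 0 T))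
    (hηpos : ∀ t ∈ Set.Icc (0 : ℝ) T, 0 < η t)
    (D E F G H I L M N O P Q D' E' F' G' H' I' L' M' N' O' P' Q' : ℝ → ℝ)
    (hD : ∀ t ∈ Set.Ico (0 : ℝ) T, HasDerivAt D (D' t) t)
    (hE : ∀ t ∈ Set.Ico (0 : ℝ) T, HasDerivAt E (E' t) t)
    (hF : ∀ t ∈ Set.Ico (0 : ℝ) T, HasDerivAt F (F' t) t)
    (hG : ∀ t ∈ Set.Ico (0 : ℝ) T, HasDerivAt G (G' t) t)
    (hH : ∀ t ∈ Set.Ico (0 : ℝ) T, HasDerivAt H (H' t) t)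
    (hI : ∀ t ∈ Set.Ico (0 : ℝ) T, HasDerivAt I (I' t) t)
    (hL : ∀ t ∈ Set.Ico (0 : ℝ) T, HasDerivAt L (L' t) t)
    (hM : ∀ t ∈ Set.Ico (0 : ℝ) T, HasDerivAt M (M' t) t)
    (hN : ∀ t ∈ Set.Ico (0 : ℝ) T, HasDerivAt N (N' t) t)
    (hO : ∀ t ∈ Set.Ico (0 : ℝ) T, HasDerivAt O (O' t) t)
    (hP : ∀ t ∈ Set.Ico (0 : ℝ) T, HasDerivAt P (P' t) t)
    (hQ : ∀ t ∈ Set.Ico (0 : ℝ) T, HasDerivAt Q (Q' t) t)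
    (hsys : ∀ t ∈ Set.Ico (0 : ℝ) T,
      (-D' t = -(D t) ^ 2 / η t + μ * (σ₁ t) ^ 2 * (1 + N t) ^ 2
          + μ * (σ₂ t) ^ 2 * (N t) ^ 2) ∧
      (-E' t = -2 * θ t * E t - (F t) ^ 2 / (4 * η t)
          + 4 * μ * ((σ₁ t) ^ 2 + (σ₂ t) ^ 2) * (M t) ^ 2) ∧
      (-F' t = -θ t - θ t * F t - D t * F t / η t
          + 4 * μ * (σ₁ t) ^ 2 * (1 + N t) * M t + 4 * μ * (σ₂ t) ^ 2 * M t * N t) ∧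
      (-G' t = -D t * G t / η t + 2 * μ * (σ₁ t) ^ 2 * (1 + N t) * P t
          + 2 * μ * (σ₂ t) ^ 2 * N t * P t) ∧
      (-H' t = -θ t * H t - F t * G t / (2 * η t)
          + 4 * μ * ((σ₁ t) ^ 2 + (σ₂ t) ^ 2) * M t * P t) ∧
      (-I' t = ((σ₁ t) ^ 2 + (σ₂ t) ^ 2) * E t - (G t) ^ 2 / (4 * η t)
          + μ * ((σ₁ t) ^ 2 + (σ₂ t) ^ 2) * (P t) ^ 2) ∧
      (-L' t = (D t) ^ 2 / η t - 2 * D t * L t / η t) ∧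
      (-M' t = (F t) ^ 2 / (4 * η t) - 2 * θ t * M t - F t * N t / (2 * η t)) ∧
      (-N' t = -θ t + D t * F t / η t - θ t * N t
          - (D t * N t + F t * L t) / η t) ∧
      (-O' t = (D t * G t - D t * O t - G t * L t) / η t) ∧
      (-P' t = -θ t * P t + (F t * G t - F t * O t - G t * N t) / (2 * η t)) ∧
      (-Q' t = (G t) ^ 2 / (4 * η t) + ((σ₁ t) ^ 2 + (σ₂ t) ^ 2) * M t
          - G t * O t / (2 * η t))) :
    ∀ (x β : ℝ), ∀ t ∈ Set.Ico (0 : ℝ) T,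
      (0 = -θ t * x * β
          - pdB (quadAnsatz D E F G H I) x β t * θ t * β
          + (1 / 2) * pdBB (quadAnsatz D E F G H I) x β t * ((σ₁ t) ^ 2 + (σ₂ t) ^ 2)
          + pdT (quadAnsatz D E F G H I) x β t
          - (pdX (quadAnsatz D E F G H I) x β t) ^ 2 / (4 * η t)
          + μ * (σ₁ t) ^ 2 * (x + pdB (quadAnsatz L M N O P Q) x β t) ^ 2
          + μ * (σ₂ t) ^ 2 * (pdB (quadAnsatz L M N O P Q) x β t) ^ 2) ∧
      (0 = -θ t * x * β
          + (pdX (quadAnsatz D E F G H I) x β t) ^ 2 / (4 * η t)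
          - pdB (quadAnsatz L M N O P Q) x β t * θ t * β
          + (1 / 2) * pdBB (quadAnsatz L M N O P Q) x β t * ((σ₁ t) ^ 2 + (σ₂ t) ^ 2)
          - pdX (quadAnsatz D E F G H I) x β t * pdX (quadAnsatz L M N O P Q) x β t
              / (2 * η t)
          + pdT (quadAnsatz L M N O P Q) x β t) :=
  fun x β t ht =>
    signal_ODE_system_implies_HJB_general (hηpos t (Set.Ico_subset_Icc_self ht)).ne'
      (hD t ht) (hE t ht) (hF t ht) (hG t ht) (hH t ht) (hI t ht)
      (hL t ht) (hM t ht) (hN t ht) (hO t ht) (hP t ht) (hQ t ht) (hsys t ht) x β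
end

section
/- Let μ, σ, η, T be positive real constants, set c := √(μσ²/η), and define C : ℝ × [0,T) → ℝ by C(x,t) = x²·√(μησ²)·coth(c(T−t)). Then C satisfies the HJB equation 0 = μσ²x² + ∂C/∂t(x,t) − (∂C/∂x(x,t))²/(4η) for all x ∈ ℝ and t ∈ [0,T), and for every x ∈ ℝ, (T−t)·C(x,t) → η·x² as t → T⁻. -/
/-!
The ansatz `C(x, t) = x² a(t)` reduces the HJB equation to the scalar Riccati equation
`a' = a²/η - κ` with `κ = μσ²`. As `coth' = 1 - coth²`, this is solved by
`a(t) = ηc coth(c(T - t))` whenever `ηc² = κ`, and the terminal condition follows from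
`u coth u → 1` as `u → 0`, with `u = c(T - t)`.
-/

open Filter Topology

/-- The hyperbolic cotangent of a real number, with the junk value `coth 0 = 0`. -/
noncomputable def coth (u : ℝ) : ℝ :=
  Real.cosh u / Real.sinh u

theorem hasDerivAt_coth {u : ℝ} (hu : u ≠ 0) : HasDerivAt coth (1 - coth u ^ 2) u := by
  have hsinh : Real.sinh u ≠ 0 := Real.sinh_ne_zero.mpr hu
  refine ((Real.hasDerivAt_cosh u).div (Real.hasDerivAt_sinh u) hsinh).congr_deriv ?_
  rw [coth]
  field_simp

theorem tendsto_mul_coth_nhdsNE_zero : Tendsto (fun u => u * coth u) (𝓝[≠] 0) (𝓝 1) := by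
  have hslope : Tendsto (slope Real.sinh 0) (𝓝[≠] 0) (𝓝 1) := by
    simpa only [Real.cosh_zero] using (Real.hasDerivAt_sinh 0).tendsto_slope
  have hcosh : Tendsto Real.cosh (𝓝[≠] 0) (𝓝 1) := by
    simpa only [Real.cosh_zero] using (Real.continuous_cosh.tendsto 0).mono_left nhdsWithin_le_nhds
  have hdiv : Tendsto (fun u => Real.cosh u / slope Real.sinh 0 u) (𝓝[≠] 0) (𝓝 1) := by
    simpa only [div_one] using! hcosh.div hslope one_ne_zero
  refine hdiv.congr fun u => ?_
  rw [coth, slope_def_field, Real.sinh_zero, sub_zero, sub_zero, div_div_eq_mul_div,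
    mul_div_assoc', mul_comm]

theorem mul_sqrt_div {η : ℝ} (hη : 0 ≤ η) (κ : ℝ) : η * √(κ / η) = √(κ * η) := by
  rw [Real.sqrt_div' κ hη, Real.sqrt_mul' κ hη, mul_div_left_comm, Real.div_sqrt]

theorem hasDerivAt_mul_const_sub {𝕜 : Type*} [NontriviallyNormedField 𝕜] (c T t : 𝕜) :
    HasDerivAt (fun s => c * (T - s)) (-c) t := by
  simpa only [mul_neg_one] using ((hasDerivAt_id' t).const_sub T).const_mul c

theorem hjb_sq_mul_of_riccati {𝕜 : Type*} [NontriviallyNormedField 𝕜] [CharZero 𝕜]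
    {a : 𝕜 → 𝕜} {κ η t : 𝕜} (ha : HasDerivAt a (a t ^ 2 / η - κ) t) (x : 𝕜) :
    0 = κ * x ^ 2 + deriv (fun s => x ^ 2 * a s) t
      - deriv (fun y => y ^ 2 * a t) x ^ 2 / (4 * η) := by
  have htime : deriv (fun s => x ^ 2 * a s) t = x ^ 2 * (a t ^ 2 / η - κ) :=
    (ha.const_mul (x ^ 2)).deriv
  have hspace : deriv (fun y => y ^ 2 * a t) x = 2 * x * a t := by
    simp
  rw [htime, hspace]
  ring

/-- The coefficient of `x²` in the value function: the solution of the Riccati equation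
`a' = a²/η - ηc²` that blows up at the horizon `T`. -/
noncomputable def riccatiCoeff (η c T t : ℝ) : ℝ :=
  η * c * coth (c * (T - t))

section RiccatiCoeff

variable {c T : ℝ}

theorem hasDerivAt_riccatiCoeff {η t : ℝ} (hη : η ≠ 0) (hc : c ≠ 0) (ht : t ≠ T) :
    HasDerivAt (riccatiCoeff η c T) (riccatiCoeff η c T t ^ 2 / η - η * c ^ 2) t := by
  have hu : c * (T - t) ≠ 0 := mul_ne_zero hc (sub_ne_zero.mpr ht.symm)
  have hcoth := (hasDerivAt_coth hu).comp t (hasDerivAt_mul_const_sub c T t)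
  refine (hcoth.const_mul (η * c)).congr_deriv ?_
  rw [riccatiCoeff]
  field_simp
  ring

theorem tendsto_sub_mul_riccatiCoeff (η : ℝ) (hc : c ≠ 0) :
    Tendsto (fun t => (T - t) * riccatiCoeff η c T t) (𝓝[≠] T) (𝓝 η) := by
  have hu : Tendsto (fun t => c * (T - t)) (𝓝[≠] T) (𝓝[≠] 0) := by
    simpa only [sub_self, mul_zero] using
      (hasDerivAt_mul_const_sub c T T).tendsto_nhdsNE (neg_ne_zero.mpr hc)
  have hlim := (tendsto_mul_coth_nhdsNE_zero.comp hu).const_mul η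
  rw [mul_one] at hlim
  refine hlim.congr fun t => ?_
  rw [Function.comp_apply, riccatiCoeff]
  ring

end RiccatiCoeff

/-- Let μ, σ, η, T be positive constants, `c := √(μσ²/η)`, and
`C(x,t) = x²·√(μησ²)·coth(c(T−t))` (with `coth u = cosh u / sinh u`). Then
`C` satisfies the HJB equation `0 = μσ²x² + C_t − C_x²/(4η)` for all `x ∈ ℝ`
and `t ∈ [0,T)`, and for every `x`, `(T−t)·C(x,t) → η·x²` as `t → T⁻`. -/
theorem basic_model_value_function
    (μ σ η T : ℝ) (hμ : 0 < μ) (hσ : 0 < σ) (hη : 0 < η) (hT : 0 < T)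
    (c : ℝ) (hc : c = Real.sqrt (μ * σ ^ 2 / η))
    (C : ℝ → ℝ → ℝ)
    (hC : C = fun x t => x ^ 2 * (Real.sqrt (μ * η * σ ^ 2) *
      (Real.cosh (c * (T - t)) / Real.sinh (c * (T - t))))) :
    (∀ x : ℝ, ∀ t ∈ Set.Ico (0 : ℝ) T,
        0 = μ * σ ^ 2 * x ^ 2 + deriv (fun s => C x s) t
            - (deriv (fun y => C y t) x) ^ 2 / (4 * η)) ∧
      ∀ x : ℝ, Filter.Tendsto (fun t => (T - t) * C x t)
        (nhdsWithin T (Set.Iio T)) (nhds (η * x ^ 2)) := by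
  have hc_ne : c ≠ 0 := by
    rw [hc]
    positivity
  have hκ : η * c ^ 2 = μ * σ ^ 2 := by
    rw [hc, Real.sq_sqrt (by positivity), mul_div_cancel₀ _ hη.ne']
  have hcoeff : √(μ * η * σ ^ 2) = η * c := by
    rw [hc, mul_sqrt_div hη.le, mul_right_comm]
  have hansatz : C = fun x t => x ^ 2 * riccatiCoeff η c T t := by
    rw [hC, hcoeff]
    simp only [riccatiCoeff, coth]
  subst hansatz
  refine ⟨fun x t ht => ?_, fun x => ?_⟩
  · rw [← hκ]
    exact hjb_sq_mul_of_riccati (hasDerivAt_riccatiCoeff hη.ne' hc_ne ht.2.ne) x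
  · have hlim := (tendsto_sub_mul_riccatiCoeff (T := T) η hc_ne).mul_const (x ^ 2)
    refine (hlim.mono_left (nhdsLT_le_nhdsNE T)).congr fun t => ?_
    ring
end
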